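/- arXiv:2003.14191 — 2 statements merged into one kernel-verified Lean document; each statement's English description precedes it below -/
import Mathlib

section
/- Let $\rho : \mathbb{R}^3 \to [0,\infty)$ be integrable, bounded, and radial, i.e. $\rho(Rx) = \rho(x)$ for every $R \in SO(3)$ and $x \in \mathbb{R}^3$. Then for every $x \ne 0$, $\frac{1}{4\pi}\int_{\mathbb{R}^3} \frac{(x-y)\,\rho(y)}{|x-y|^3}\,dy = \frac{x}{4\pi |x|^3} \int_{|y| \le |x|} \rho(y)\,dy$. In particular this vector field is at each $x \ne 0$ a nonnegative multiple of $x/|x|$, and its Euclidean norm is at most $\frac{1}{4\pi |x|^2} \int_{\mathbb{R}^3} \rho(y)\,dy$. -/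
open MeasureTheory Real Set
noncomputable section

abbrev E3 := EuclideanSpace ℝ (Fin 3)

/-!
The reflection in the line `ℝx` preserves `ρ` and fixes `x`, hence fixes the field at `x`, which is
therefore parallel to `x`. Its component along `x` is the integral of a function of `r = |y|` and
`u = cos ∠(x, y)` only, and by Archimedes' theorem Lebesgue measure becomes `2πr² dr du`, with
`-1 ≤ u ≤ 1`, in these coordinates. On the sphere of radius `r` the kernel of this component is
`(a - ru) / (a² + r² - 2aru)^(3/2)`, where `a = |x|`. It has the primitive
`(au - r) / (a² (a² + r² - 2aru)^(1/2))` in `u`, so its average over `-1 ≤ u ≤ 1` is `a⁻²` when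
`r < a` and `0` when `r > a`.
-/

section Rotations

open Module Submodule

variable {E : Type*} [NormedAddCommGroup E] [InnerProductSpace ℝ E] [FiniteDimensional ℝ E]

lemma det_reflection_orthogonal_singleton {v : E} (hv : v ≠ 0) :
    (ℝ ∙ v)ᗮ.reflection.toLinearEquiv.det = -1 := by
  rw [linearEquiv_det_reflection, orthogonal_orthogonal, finrank_span_singleton hv, pow_one]

lemma exists_ne_zero_inner_eq_zero (hE : 2 ≤ finrank ℝ E) (x : E) :
    ∃ w : E, w ≠ 0 ∧ inner ℝ x w = 0 := by
  have hx_le : finrank ℝ (ℝ ∙ x) ≤ 1 := by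
    simpa using finrank_span_le_card (R := ℝ) ({x} : Set E)
  have hx_orth : 0 < finrank ℝ (ℝ ∙ x)ᗮ := by
    have := (ℝ ∙ x).finrank_add_finrank_orthogonal
    lia
  obtain ⟨w, hw_mem, hw⟩ := exists_mem_ne_zero_of_ne_bot (one_le_finrank_iff.1 hx_orth)
  exact ⟨w, hw, mem_orthogonal_singleton_iff_inner_right.1 hw_mem⟩

lemma exists_rotation_map_eq (hE : 2 ≤ finrank ℝ E) {x y : E} (hxy : ‖x‖ = ‖y‖) :
    ∃ R : E ≃ₗᵢ[ℝ] E, R.toLinearEquiv.det = 1 ∧ R x = y := by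
  obtain rfl | hne := eq_or_ne x y
  · exact ⟨.refl ℝ E, by simp, rfl⟩
  -- The reflection exchanging `x` and `y` has determinant `-1`; precede it by one fixing `x`.
  obtain ⟨w, hw, hxw⟩ := exists_ne_zero_inner_eq_zero hE x
  refine ⟨(ℝ ∙ w)ᗮ.reflection.trans (ℝ ∙ (x - y))ᗮ.reflection, ?_, ?_⟩
  · rw [LinearIsometryEquiv.toLinearEquiv_trans, LinearEquiv.det_trans,
      det_reflection_orthogonal_singleton hw,
      det_reflection_orthogonal_singleton (sub_ne_zero.2 hne), neg_mul_neg, one_mul]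
  · have hx_mem : x ∈ (ℝ ∙ w)ᗮ :=
      mem_orthogonal_singleton_iff_inner_left.2 hxw
    rw [LinearIsometryEquiv.trans_apply, reflection_mem_subspace_eq_self hx_mem,
      reflection_sub hxy]

lemma factorsThrough_norm_of_rotation_invariant {α : Type*} (hE : 2 ≤ finrank ℝ E) {f : E → α}
    (hf : ∀ R : E ≃ₗᵢ[ℝ] E, R.toLinearEquiv.det = 1 → ∀ x, f (R x) = f x) :
    f.FactorsThrough norm := by
  intro x y hxy
  obtain ⟨R, hR, rfl⟩ := exists_rotation_map_eq hE hxy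
  exact (hf R hR x).symm

lemma integral_mem_of_reflection_equivariant [MeasurableSpace E] [BorelSpace E]
    (K : Submodule ℝ E) {V : E → E} (hV : ∀ y, V (K.reflection y) = K.reflection (V y)) :
    ∫ y, V y ∈ K := by
  rw [← reflection_eq_self_iff]
  calc K.reflection (∫ y, V y)
      = ∫ y, K.reflection (V y) :=
        (K.reflection.toContinuousLinearEquiv.integral_comp_comm V).symm
    _ = ∫ y, V (K.reflection y) := by simp only [hV]
    _ = ∫ y, V y :=
        K.reflection.measurePreserving.integral_comp
          K.reflection.toHomeomorph.measurableEmbedding V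

end Rotations

section NewtonKernel

open Module

variable {E : Type*} [NormedAddCommGroup E] [NormedSpace ℝ E]

/-- The Newtonian kernel `z / |z|ᵈ` of a `d`-dimensional space: the gradient of the fundamental
solution of the Laplacian, up to the factor of the area of the unit sphere. Its value at `0`
is `0`. -/
def newtonKernel (z : E) : E := (‖z‖ ^ finrank ℝ E)⁻¹ • z

lemma map_newtonKernel (R : E ≃ₗᵢ[ℝ] E) (z : E) : R (newtonKernel z) = newtonKernel (R z) := by
  simp only [newtonKernel, map_smul, R.norm_map]

lemma norm_newtonKernel_le (z : E) : ‖newtonKernel z‖ ≤ ‖z‖ ^ (1 - finrank ℝ E : ℝ) := by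
  obtain rfl | hz := eq_or_ne z 0
  · simpa only [newtonKernel, smul_zero, norm_zero] using rpow_nonneg le_rfl _
  · rw [newtonKernel, norm_smul, norm_inv, norm_pow, norm_norm, rpow_sub (norm_pos_iff.2 hz),
      rpow_one, rpow_natCast, div_eq_inv_mul]

lemma norm_newtonKernel_le_one [FiniteDimensional ℝ E] [Nontrivial E] {z : E} (hz : 1 ≤ ‖z‖) :
    ‖newtonKernel z‖ ≤ 1 := by
  have hE : (1 : ℝ) ≤ finrank ℝ E := mod_cast finrank_pos (R := ℝ) (M := E)
  exact (norm_newtonKernel_le z).trans (rpow_le_one_of_one_le_of_nonpos hz (sub_nonpos.2 hE))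

variable [FiniteDimensional ℝ E] [MeasurableSpace E] [BorelSpace E]
  {μ : Measure E} [μ.IsAddHaarMeasure]

lemma integrable_smul_comp_sub_left {F : Type*} [NormedAddCommGroup F] [NormedSpace ℝ F]
    {k : E → F} {s : Set E} {C : ℝ} (hk : LocallyIntegrable k μ) (hs : IsCompact s)
    (hkC : ∀ z ∉ s, ‖k z‖ ≤ C) {ρ : E → ℝ} {A : ℝ} (hρ : Integrable ρ μ) (hρA : ∀ y, ‖ρ y‖ ≤ A)
    (x : E) : Integrable (fun y ↦ ρ y • k (x - y)) μ := by
  suffices Integrable (fun z ↦ ρ (x - z) • k z) μ by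
    simpa only [sub_sub_cancel] using this.comp_sub_left x
  have hρx : Integrable (fun z ↦ ρ (x - z)) μ := hρ.comp_sub_left x
  have h_near : IntegrableOn (fun z ↦ ρ (x - z) • k z) s μ :=
    (hk.integrableOn_isCompact hs).bdd_smul A hρx.aestronglyMeasurable.restrict
      (.of_forall fun z ↦ hρA (x - z))
  have h_far : IntegrableOn (fun z ↦ ρ (x - z) • k z) sᶜ μ :=
    hρx.integrableOn.smul_bdd C hk.aestronglyMeasurable.restrict
      (ae_restrict_of_forall_mem hs.measurableSet.compl hkC)
  simpa only [union_compl_self, integrableOn_univ] using h_near.union h_far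

variable [Nontrivial E]

lemma locallyIntegrable_newtonKernel : LocallyIntegrable (newtonKernel : E → E) μ := by
  refine locallyIntegrable_of_norm_le_rpow (C := 1) finrank_pos (sub_one_lt (finrank ℝ E : ℝ))
    (.of_forall fun z ↦ ?_) ?_
  · rw [one_mul, neg_sub]
    exact norm_newtonKernel_le z
  · unfold newtonKernel
    fun_prop

lemma integrable_smul_newtonKernel {ρ : E → ℝ} {A : ℝ} (hρ : Integrable ρ μ)
    (hρA : ∀ y, ‖ρ y‖ ≤ A) (x : E) : Integrable (fun y ↦ ρ y • newtonKernel (x - y)) μ := by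
  refine integrable_smul_comp_sub_left locallyIntegrable_newtonKernel
    (isCompact_closedBall (0 : E) 1) (fun z hz ↦ norm_newtonKernel_le_one ?_) hρ hρA x
  exact (not_le.1 (mem_closedBall_zero_iff.not.1 hz)).le

end NewtonKernel

lemma integral_smul_newtonKernel_mem_span {E : Type*} [NormedAddCommGroup E]
    [InnerProductSpace ℝ E] [FiniteDimensional ℝ E] [MeasurableSpace E] [BorelSpace E]
    {ρ : E → ℝ} (hρ : ρ.FactorsThrough norm) (x : E) :
    ∫ y, ρ y • newtonKernel (x - y) ∈ ℝ ∙ x := by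
  refine integral_mem_of_reflection_equivariant _ fun y ↦ ?_
  have hx : (ℝ ∙ x).reflection x = x :=
    Submodule.reflection_mem_subspace_eq_self (Submodule.mem_span_singleton_self x)
  rw [map_smul, map_newtonKernel, map_sub, hx,
    hρ (LinearIsometryEquiv.norm_map (ℝ ∙ x).reflection y)]

section SphericalCoordinates

open scoped ENNReal

lemma sqrt_mul_cos_sq_add_mul_sin_sq {r : ℝ} (hr : 0 ≤ r) (θ : ℝ) :
    √((r * cos θ) ^ 2 + (r * sin θ) ^ 2) = r := by
  rw [show (r * cos θ) ^ 2 + (r * sin θ) ^ 2 = r ^ 2 * (cos θ ^ 2 + sin θ ^ 2) by ring,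
    cos_sq_add_sin_sq, mul_one, sqrt_sq hr]

lemma lintegral_eq_lintegral_polar {f : ℝ × ℝ → ℝ≥0∞} (hf : Measurable f) :
    ∫⁻ p, f p = ∫⁻ r in Ioi (0 : ℝ), ∫⁻ θ in Ioo (-π) π,
      ENNReal.ofReal r * f (r * cos θ, r * sin θ) := by
  have h_target : polarCoord.target = Ioi (0 : ℝ) ×ˢ Ioo (-π) π := rfl
  rw [← lintegral_comp_polarCoord_symm, h_target, Measure.volume_eq_prod, ← Measure.prod_restrict,
    lintegral_prod]
  · rfl
  · have : Measurable polarCoord.symm := continuous_polarCoord_symm.measurable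
    fun_prop

lemma setLIntegral_upperHalfPlane_eq_lintegral_polar {f : ℝ × ℝ → ℝ≥0∞} (hf : Measurable f) :
    ∫⁻ p in {p : ℝ × ℝ | 0 < p.2}, f p = ∫⁻ r in Ioi (0 : ℝ), ∫⁻ θ in Ioo 0 π,
      ENNReal.ofReal r * f (r * cos θ, r * sin θ) := by
  have h_meas : MeasurableSet {p : ℝ × ℝ | 0 < p.2} :=
    measurableSet_lt measurable_const measurable_snd
  rw [← lintegral_indicator h_meas, lintegral_eq_lintegral_polar (hf.indicator h_meas)]
  refine setLIntegral_congr_fun measurableSet_Ioi fun r (hr : 0 < r) ↦ ?_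
  rw [← lintegral_indicator measurableSet_Ioo, ← lintegral_indicator measurableSet_Ioo]
  refine lintegral_congr fun θ ↦ ?_
  by_cases hθ : θ ∈ Ioo (-π) π
  · have h_mem : θ ∈ Ioo 0 π ↔ 0 < r * sin θ := by
      rw [mul_pos_iff_of_pos_left hr]
      refine ⟨sin_pos_of_mem_Ioo, fun h_sin ↦ ⟨?_, hθ.2⟩⟩
      by_contra! hθ_nonpos
      exact h_sin.not_ge (sin_nonpos_of_nonpos_of_neg_pi_le hθ_nonpos hθ.1.le)
    simp only [indicator, if_pos hθ, h_mem, mem_ofPred_eq, mul_ite, mul_zero]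
  · have hθ' : θ ∉ Ioo 0 π := fun h ↦ hθ ⟨(neg_neg_of_pos pi_pos).trans h.1, h.2⟩
    rw [indicator_of_notMem hθ, indicator_of_notMem hθ']

lemma lintegral_comp_sqrt_sq_add_sq {h : ℝ → ℝ≥0∞} (hh : Measurable h) :
    ∫⁻ q : ℝ × ℝ, h √(q.1 ^ 2 + q.2 ^ 2) =
      ∫⁻ s in Ioi (0 : ℝ), ENNReal.ofReal (2 * π * s) * h s := by
  rw [lintegral_eq_lintegral_polar (by fun_prop)]
  refine setLIntegral_congr_fun measurableSet_Ioi fun s (hs : 0 < s) ↦ ?_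
  simp only [sqrt_mul_cos_sq_add_mul_sin_sq hs.le]
  rw [setLIntegral_const, Real.volume_Ioo, mul_right_comm, ← ENNReal.ofReal_mul hs.le]
  ring_nf

lemma lintegral_sin_mul_comp_cos (h : ℝ → ℝ≥0∞) :
    ∫⁻ θ in Ioo 0 π, ENNReal.ofReal (sin θ) * h (cos θ) = ∫⁻ u in Icc (-1 : ℝ) 1, h u := by
  rw [setLIntegral_congr Ioo_ae_eq_Icc, ← bijOn_cos.image_eq,
    lintegral_image_eq_lintegral_abs_deriv_mul measurableSet_Icc
      (fun θ _ ↦ (hasDerivAt_cos θ).hasDerivWithinAt) injOn_cos]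
  refine setLIntegral_congr_fun measurableSet_Icc fun θ hθ ↦ ?_
  rw [abs_neg, abs_of_nonneg (sin_nonneg_of_mem_Icc hθ)]

lemma measurePreserving_coordinates :
    MeasurePreserving (fun y : E3 ↦ (y 0, y 1, y 2)) :=
  ((MeasurePreserving.id volume).prod (volume_preserving_finTwoArrow ℝ)).comp
    ((volume_preserving_piFinSuccAbove (fun _ : Fin 3 ↦ ℝ) 0).comp
      (PiLp.volume_preserving_ofLp (Fin 3)))

lemma lintegral_eq_lintegral_cylindrical {h : ℝ × ℝ → ℝ≥0∞} (hh : Measurable h) :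
    ∫⁻ y : E3, h (y 0, √(y 1 ^ 2 + y 2 ^ 2)) =
      ∫⁻ p in {p : ℝ × ℝ | 0 < p.2}, ENNReal.ofReal (2 * π * p.2) * h p := by
  have h_halfPlane : {p : ℝ × ℝ | 0 < p.2} = univ ×ˢ Ioi 0 := by ext; simp
  calc ∫⁻ y : E3, h (y 0, √(y 1 ^ 2 + y 2 ^ 2))
      = ∫⁻ p : ℝ × ℝ × ℝ, h (p.1, √(p.2.1 ^ 2 + p.2.2 ^ 2)) :=
        measurePreserving_coordinates.lintegral_comp
          (f := fun p ↦ h (p.1, √(p.2.1 ^ 2 + p.2.2 ^ 2))) (by fun_prop)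
    _ = ∫⁻ z, ∫⁻ q : ℝ × ℝ, h (z, √(q.1 ^ 2 + q.2 ^ 2)) := by
        rw [Measure.volume_eq_prod, lintegral_prod _ (by fun_prop)]
    _ = ∫⁻ z, ∫⁻ s in Ioi (0 : ℝ), ENNReal.ofReal (2 * π * s) * h (z, s) :=
        lintegral_congr fun z ↦ lintegral_comp_sqrt_sq_add_sq (h := fun s ↦ h (z, s)) (by fun_prop)
    _ = ∫⁻ p in {p : ℝ × ℝ | 0 < p.2}, ENNReal.ofReal (2 * π * p.2) * h p := by
        rw [h_halfPlane, Measure.volume_eq_prod, ← Measure.prod_restrict, Measure.restrict_univ,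
          lintegral_prod _ (by fun_prop)]

lemma lintegral_comp_norm_div_norm {F : ℝ × ℝ → ℝ≥0∞} (hF : Measurable F) :
    ∫⁻ y : E3, F (‖y‖, y 0 / ‖y‖) =
      ∫⁻ r in Ioi (0 : ℝ), ENNReal.ofReal (2 * π * r ^ 2) * ∫⁻ u in Icc (-1 : ℝ) 1, F (r, u) := by
  have h_norm (y : E3) : ‖y‖ = √(y 0 ^ 2 + √(y 1 ^ 2 + y 2 ^ 2) ^ 2) := by
    rw [sq_sqrt (by positivity), EuclideanSpace.norm_eq, Fin.sum_univ_three, add_assoc]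
    simp only [norm_eq_abs, sq_abs]
  simp only [h_norm]
  rw [lintegral_eq_lintegral_cylindrical
      (h := fun p ↦ F (√(p.1 ^ 2 + p.2 ^ 2), p.1 / √(p.1 ^ 2 + p.2 ^ 2))) (by fun_prop),
    setLIntegral_upperHalfPlane_eq_lintegral_polar (by fun_prop)]
  refine setLIntegral_congr_fun measurableSet_Ioi fun r (hr : 0 < r) ↦ ?_
  rw [← lintegral_sin_mul_comp_cos fun u ↦ F (r, u), ← lintegral_const_mul _ (by fun_prop)]
  refine lintegral_congr fun θ ↦ ?_
  simp only [sqrt_mul_cos_sq_add_mul_sin_sq hr.le, mul_div_cancel_left₀ _ hr.ne']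
  rw [← mul_assoc, ← mul_assoc (ENNReal.ofReal (2 * π * r ^ 2)), ← ENNReal.ofReal_mul hr.le,
    ← ENNReal.ofReal_mul (by positivity)]
  ring_nf

end SphericalCoordinates

section ShellAverages

open InnerProductGeometry

/-- The push-forward of Lebesgue measure on `ℝ³` under `y ↦ (‖y‖, cos ∠(x, y))`. That its second
factor is Lebesgue measure is Archimedes' theorem that the axial projection of a sphere is
area-preserving. -/
def radiusCosineMeasure : Measure (ℝ × ℝ) :=
  ((volume.restrict (Ioi 0)).withDensity fun r ↦ ENNReal.ofReal (2 * π * r ^ 2)).prod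
    (volume.restrict (Icc (-1) 1))

lemma lintegral_radiusCosineMeasure {F : ℝ × ℝ → ENNReal} (hF : Measurable F) :
    ∫⁻ p, F p ∂radiusCosineMeasure =
      ∫⁻ r in Ioi (0 : ℝ), ENNReal.ofReal (2 * π * r ^ 2) * ∫⁻ u in Icc (-1 : ℝ) 1, F (r, u) := by
  rw [radiusCosineMeasure, lintegral_prod _ hF.aemeasurable,
    lintegral_withDensity_eq_lintegral_mul _ (by fun_prop) hF.lintegral_prod_right']
  rfl

lemma measurePreserving_norm_div_norm :
    MeasurePreserving (fun y : E3 ↦ (‖y‖, y 0 / ‖y‖)) volume radiusCosineMeasure := by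
  have h_meas : Measurable fun y : E3 ↦ (‖y‖, y 0 / ‖y‖) := by fun_prop
  refine ⟨h_meas, Measure.ext_of_lintegral _ fun F hF ↦ ?_⟩
  rw [lintegral_map hF h_meas, lintegral_comp_norm_div_norm hF, lintegral_radiusCosineMeasure hF]

lemma measurePreserving_norm_cos_angle {x : E3} (hx : x ≠ 0) :
    MeasurePreserving (fun y : E3 ↦ (‖y‖, cos (angle x y))) volume radiusCosineMeasure := by
  obtain ⟨R, -, hR⟩ := exists_rotation_map_eq (x := x) (y := EuclideanSpace.single 0 ‖x‖)
    (by simp) (by simp)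
  convert! measurePreserving_norm_div_norm.comp R.measurePreserving using 1
  ext y
  · simp
  · have h_inner : inner ℝ x y = ‖x‖ * R y 0 := by
      rw [← R.inner_map_map, hR, EuclideanSpace.inner_single_left, conj_trivial]
    rw [cos_angle, h_inner, mul_div_mul_left _ _ (norm_ne_zero_iff.2 hx)]
    simp

lemma integral_comp_norm_cos_angle {F : Type*} [NormedAddCommGroup F] [NormedSpace ℝ F]
    {x : E3} (hx : x ≠ 0) {Φ : ℝ × ℝ → F} (hΦ : AEStronglyMeasurable Φ radiusCosineMeasure) :
    ∫ y : E3, Φ (‖y‖, cos (angle x y)) = ∫ p, Φ p ∂radiusCosineMeasure := by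
  have h_pres := measurePreserving_norm_cos_angle hx
  rw [← h_pres.map_eq] at hΦ ⊢
  exact (integral_map h_pres.aemeasurable hΦ).symm

lemma integral_comp_norm_cos_angle_eq_integral_average {F : Type*} [NormedAddCommGroup F]
    [NormedSpace ℝ F] {x : E3} (hx : x ≠ 0) {Φ : ℝ × ℝ → F}
    (hΦ : Integrable Φ radiusCosineMeasure) :
    ∫ y : E3, Φ (‖y‖, cos (angle x y)) = ∫ y : E3, ⨍ u in Icc (-1 : ℝ) 1, Φ (‖y‖, u) := by
  have h_average : AEStronglyMeasurable (fun p : ℝ × ℝ ↦ ⨍ u in Icc (-1 : ℝ) 1, Φ (p.1, u))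
      radiusCosineMeasure := by
    simp only [setAverage_eq]
    exact (hΦ.aestronglyMeasurable.integral_prod_right'.const_smul _).comp_fst
  rw [integral_comp_norm_cos_angle hx hΦ.aestronglyMeasurable,
    integral_comp_norm_cos_angle hx h_average, radiusCosineMeasure, integral_prod _ hΦ,
    integral_fun_fst fun r ↦ ⨍ u in Icc (-1 : ℝ) 1, Φ (r, u), ← integral_smul]
  refine integral_congr_ae (.of_forall fun r ↦ ?_)
  simp only [setAverage_eq]
  norm_num [smul_smul]

lemma aestronglyMeasurable_of_integrable_comp_norm {E : Type*} [NormedAddCommGroup E]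
    [NormedSpace ℝ E] [FiniteDimensional ℝ E] [Nontrivial E] [MeasurableSpace E] [BorelSpace E]
    {μ : Measure E} [μ.IsAddHaarMeasure] {g : ℝ → ℝ} (hg : Integrable (fun y : E ↦ g ‖y‖) μ) :
    AEStronglyMeasurable g (volume.restrict (Ioi 0)) := by
  set d := Module.finrank ℝ E
  have h_weighted : AEStronglyMeasurable (fun r ↦ r ^ (d - 1) • g r) (volume.restrict (Ioi 0)) :=
    ((integrable_fun_norm_addHaar μ).1 hg).aestronglyMeasurable
  have h_weight : Measurable fun r : ℝ ↦ (r ^ (d - 1))⁻¹ := by fun_prop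
  refine (h_weight.aestronglyMeasurable.smul h_weighted).congr ?_
  filter_upwards [ae_restrict_mem measurableSet_Ioi] with r (hr : 0 < r)
  exact inv_smul_smul₀ (pow_ne_zero _ hr.ne') _

end ShellAverages

section ShellTheorem

open InnerProductGeometry

lemma div_norm_pow_three_smul (c : ℝ) (z : E3) : (c / ‖z‖ ^ 3) • z = c • newtonKernel z := by
  rw [newtonKernel, finrank_euclideanSpace_fin, smul_smul, div_eq_mul_inv]

/-- The component of `newtonKernel (x - y)` along `x`, as a function of `a = ‖x‖` and of
`p = (‖y‖, cos ∠(x, y))`; the radicand is `‖x - y‖²` by the law of cosines. -/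
def axialNewtonKernel (a : ℝ) (p : ℝ × ℝ) : ℝ :=
  (a - p.1 * p.2) / √(a ^ 2 + p.1 ^ 2 - 2 * a * p.1 * p.2) ^ 3

lemma measurable_axialNewtonKernel (a : ℝ) : Measurable (axialNewtonKernel a) := by
  unfold axialNewtonKernel
  fun_prop

lemma inner_newtonKernel_sub (x y : E3) :
    inner ℝ x (newtonKernel (x - y)) =
      ‖x‖ * axialNewtonKernel ‖x‖ (‖y‖, cos (angle x y)) := by
  have h_inner : inner ℝ x y = ‖x‖ * (‖y‖ * cos (angle x y)) := by
    rw [← cos_angle_mul_norm_mul_norm]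
    ring
  have h_norm : ‖x - y‖ = √(‖x‖ ^ 2 + ‖y‖ ^ 2 - 2 * ‖x‖ * ‖y‖ * cos (angle x y)) := by
    rw [← sqrt_mul_self (norm_nonneg (x - y)),
      norm_sub_sq_eq_norm_sq_add_norm_sq_sub_two_mul_norm_mul_norm_mul_cos_angle]
    simp only [sq]
  rw [newtonKernel, axialNewtonKernel, ← h_norm, finrank_euclideanSpace_fin, real_inner_smul_right,
    inner_sub_right, real_inner_self_eq_norm_sq, h_inner]
  ring

lemma hasDerivAt_axialNewtonKernel_primitive {a r u : ℝ} (ha : a ≠ 0)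
    (hu : 0 < a ^ 2 + r ^ 2 - 2 * a * r * u) :
    HasDerivAt (fun u ↦ (a * u - r) / (a ^ 2 * √(a ^ 2 + r ^ 2 - 2 * a * r * u)))
      (axialNewtonKernel a (r, u)) u := by
  have h_radicand : HasDerivAt (fun u ↦ a ^ 2 + r ^ 2 - 2 * a * r * u) (-(2 * a * r)) u := by
    simpa using ((hasDerivAt_id u).const_mul (2 * a * r)).const_sub (a ^ 2 + r ^ 2)
  have h_num : HasDerivAt (fun u ↦ a * u - r) a u := by
    simpa using ((hasDerivAt_id u).const_mul a).sub_const r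
  have h_sqrt := sqrt_pos.2 hu
  convert! h_num.div ((h_radicand.sqrt hu.ne').const_mul (a ^ 2)) (by positivity) using 1
  have h_sq := sq_sqrt hu.le
  simp only [axialNewtonKernel]
  set S := √(a ^ 2 + r ^ 2 - 2 * a * r * u)
  field_simp
  rw [h_sq]
  ring

lemma sq_add_sq_sub_two_mul_mul_mul_pos {a r u : ℝ} (ha : 0 ≤ a) (hr : 0 ≤ r) (hra : r ≠ a)
    (hu : u ≤ 1) : 0 < a ^ 2 + r ^ 2 - 2 * a * r * u :=
  calc 0 < (r - a) ^ 2 := sq_pos_of_ne_zero (sub_ne_zero.2 hra)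
    _ = a ^ 2 + r ^ 2 - 2 * a * r * 1 := by ring
    _ ≤ a ^ 2 + r ^ 2 - 2 * a * r * u := by gcongr

lemma integral_axialNewtonKernel {a r : ℝ} (ha : 0 < a) (hr : 0 ≤ r) (hra : r ≠ a) :
    ∫ u in (-1)..1, axialNewtonKernel a (r, u) = (Iic a).indicator (fun _ ↦ 2 / a ^ 2) r := by
  have h_pos (u : ℝ) (hu : u ∈ uIcc (-1) 1) : 0 < a ^ 2 + r ^ 2 - 2 * a * r * u := by
    rw [uIcc_of_le (by norm_num)] at hu
    exact sq_add_sq_sub_two_mul_mul_mul_pos ha.le hr hra hu.2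
  have h_cont : ContinuousOn (fun u ↦ axialNewtonKernel a (r, u)) (uIcc (-1) 1) := by
    unfold axialNewtonKernel
    exact ContinuousOn.div (by fun_prop) (by fun_prop)
      fun u hu ↦ pow_ne_zero _ (sqrt_pos.2 (h_pos u hu)).ne'
  have h_at_one : √(a ^ 2 + r ^ 2 - 2 * a * r * 1) = |a - r| := by
    rw [← sqrt_sq_eq_abs]
    ring_nf
  have h_at_neg_one : √(a ^ 2 + r ^ 2 - 2 * a * r * (-1)) = a + r := by
    rw [← sqrt_sq (add_nonneg ha.le hr)]
    ring_nf
  rw [intervalIntegral.integral_eq_sub_of_hasDerivAt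
    (fun u hu ↦ hasDerivAt_axialNewtonKernel_primitive ha.ne' (h_pos u hu))
    h_cont.intervalIntegrable, h_at_one, h_at_neg_one]
  obtain h_lt | h_gt := lt_or_gt_of_ne hra
  · have h_sub : 0 < a - r := sub_pos.2 h_lt
    rw [indicator_of_mem (mem_Iic.2 h_lt.le), abs_of_pos h_sub]
    field_simp
    ring
  · have h_sub : 0 < r - a := sub_pos.2 h_gt
    rw [indicator_of_notMem (notMem_Iic.2 h_gt), abs_sub_comm, abs_of_pos h_sub]
    field_simp
    ring

lemma average_axialNewtonKernel {a r : ℝ} (ha : 0 < a) (hr : 0 ≤ r) (hra : r ≠ a) :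
    ⨍ u in Icc (-1 : ℝ) 1, axialNewtonKernel a (r, u) =
      (Iic a).indicator (fun _ ↦ (a ^ 2)⁻¹) r := by
  rw [setAverage_eq, integral_Icc_eq_integral_Ioc,
    ← intervalIntegral.integral_of_le (by norm_num), integral_axialNewtonKernel ha hr hra]
  by_cases h : r ∈ Iic a
  · simp only [indicator_of_mem h]
    norm_num
    ring
  · simp [h]

lemma integral_mul_axialNewtonKernel {x : E3} (hx : x ≠ 0) {g : ℝ → ℝ}
    (hg : Integrable fun y : E3 ↦ g ‖y‖)
    (hgk : Integrable fun y : E3 ↦ g ‖y‖ * axialNewtonKernel ‖x‖ (‖y‖, cos (angle x y))) :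
    ∫ y : E3, g ‖y‖ * axialNewtonKernel ‖x‖ (‖y‖, cos (angle x y)) =
      (‖x‖ ^ 2)⁻¹ * ∫ y in {y : E3 | ‖y‖ ≤ ‖x‖}, g ‖y‖ := by
  have hg_meas : AEStronglyMeasurable (fun p : ℝ × ℝ ↦ g p.1) radiusCosineMeasure :=
    ((aestronglyMeasurable_of_integrable_comp_norm hg).mono_ac
      (withDensity_absolutelyContinuous _ _)).comp_fst
  have hgk_int : Integrable (fun p ↦ g p.1 * axialNewtonKernel ‖x‖ p) radiusCosineMeasure :=
    ((measurePreserving_norm_cos_angle hx).integrable_comp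
      (hg_meas.mul (measurable_axialNewtonKernel ‖x‖).aestronglyMeasurable)).1 hgk
  have h_ball : MeasurableSet {y : E3 | ‖y‖ ≤ ‖x‖} :=
    measurableSet_le measurable_norm measurable_const
  have h_sphere : ∀ᵐ y : E3, ‖y‖ ≠ ‖x‖ := by
    rw [ae_iff]
    convert! Measure.addHaar_sphere (volume : Measure E3) 0 ‖x‖ using 2
    ext y
    simp
  rw [integral_comp_norm_cos_angle_eq_integral_average hx hgk_int, ← integral_const_mul,
    ← integral_indicator h_ball]
  refine integral_congr_ae ?_
  filter_upwards [h_sphere] with y hy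
  calc ⨍ u in Icc (-1 : ℝ) 1, g ‖y‖ * axialNewtonKernel ‖x‖ (‖y‖, u)
      = g ‖y‖ * ⨍ u in Icc (-1 : ℝ) 1, axialNewtonKernel ‖x‖ (‖y‖, u) := integral_const_mul _ _
    _ = g ‖y‖ * (Iic ‖x‖).indicator (fun _ ↦ (‖x‖ ^ 2)⁻¹) ‖y‖ := by
        rw [average_axialNewtonKernel (norm_pos_iff.2 hx) (norm_nonneg y) hy]
    _ = {y : E3 | ‖y‖ ≤ ‖x‖}.indicator (fun y ↦ (‖x‖ ^ 2)⁻¹ * g ‖y‖) y := by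
        simp [indicator, mul_comm]

lemma inner_integral_smul_newtonKernel {ρ : E3 → ℝ} (hρ_radial : ρ.FactorsThrough norm)
    (hρ : Integrable ρ) {x : E3} (hx : x ≠ 0)
    (h_field : Integrable fun y ↦ ρ y • newtonKernel (x - y)) :
    inner ℝ x (∫ y, ρ y • newtonKernel (x - y)) =
      ‖x‖⁻¹ * ∫ y in {y : E3 | ‖y‖ ≤ ‖x‖}, ρ y := by
  obtain ⟨g, rfl⟩ := (Function.factorsThrough_iff ρ).1 hρ_radial
  have hx_norm : ‖x‖ ≠ 0 := norm_ne_zero_iff.2 hx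
  have h_inner (y : E3) : inner ℝ x ((g ∘ norm) y • newtonKernel (x - y)) =
      ‖x‖ * (g ‖y‖ * axialNewtonKernel ‖x‖ (‖y‖, cos (angle x y))) := by
    rw [real_inner_smul_right, inner_newtonKernel_sub, mul_left_comm, Function.comp_apply]
  have h_axial : Integrable fun y : E3 ↦
      g ‖y‖ * axialNewtonKernel ‖x‖ (‖y‖, cos (angle x y)) := by
    have := h_field.const_inner (𝕜 := ℝ) x
    simp only [h_inner] at this
    exact (integrable_const_mul_iff hx_norm.isUnit _).1 this
  rw [← integral_inner h_field]
  simp only [h_inner]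
  rw [integral_const_mul, integral_mul_axialNewtonKernel hx hρ h_axial, ← mul_assoc]
  congr 1
  field_simp

theorem integral_smul_newtonKernel_of_radial {ρ : E3 → ℝ} (hρ_radial : ρ.FactorsThrough norm)
    (hρ : Integrable ρ) {x : E3} (hx : x ≠ 0)
    (h_field : Integrable fun y ↦ ρ y • newtonKernel (x - y)) :
    ∫ y, ρ y • newtonKernel (x - y) =
      ((‖x‖ ^ 3)⁻¹ * ∫ y in {y : E3 | ‖y‖ ≤ ‖x‖}, ρ y) • x := by
  have hx_norm : ‖x‖ ≠ 0 := norm_ne_zero_iff.2 hx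
  obtain ⟨c, hc⟩ :=
    Submodule.mem_span_singleton.1 (integral_smul_newtonKernel_mem_span hρ_radial x)
  have h_inner := inner_integral_smul_newtonKernel hρ_radial hρ hx h_field
  rw [← hc, real_inner_smul_right, real_inner_self_eq_norm_sq] at h_inner
  rw [← hc]
  congr 1
  field_simp at h_inner ⊢
  linarith

end ShellTheorem

/-- For a nonnegative, bounded, integrable, radial density `ρ` on `ℝ³`, the Newtonian
field `(4π)⁻¹ ∫ (x-y) ρ(y)/|x-y|³ dy` equals `x/(4π|x|³)` times the mass in the ball of
radius `|x|`; in particular at each `x ≠ 0` it is a nonnegative multiple of `x/|x|` and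
its norm is at most `(4π|x|²)⁻¹ ∫ ρ`. -/
theorem radial_field_formula
    (ρ : E3 → ℝ) (hρ_nonneg : ∀ x, 0 ≤ ρ x) (hρ_int : Integrable ρ volume)
    (hρ_bdd : ∃ A : ℝ, ∀ x, ρ x ≤ A)
    (hρ_radial : ∀ R : E3 ≃ₗᵢ[ℝ] E3, R.toLinearEquiv.det = 1 → ∀ x, ρ (R x) = ρ x) :
    ∀ x : E3, x ≠ 0 →
      ((4 * Real.pi)⁻¹ • ∫ y, (ρ y / ‖x - y‖ ^ 3) • (x - y)) =
        ((4 * Real.pi * ‖x‖ ^ 3)⁻¹ * ∫ y in {y : E3 | ‖y‖ ≤ ‖x‖}, ρ y) • x ∧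
      (∃ c : ℝ, 0 ≤ c ∧
        ((4 * Real.pi)⁻¹ • ∫ y, (ρ y / ‖x - y‖ ^ 3) • (x - y)) = c • (‖x‖⁻¹ • x)) ∧
      ‖(4 * Real.pi)⁻¹ • ∫ y, (ρ y / ‖x - y‖ ^ 3) • (x - y)‖ ≤
        (4 * Real.pi * ‖x‖ ^ 2)⁻¹ * ∫ y, ρ y := by
  intro x hx
  obtain ⟨A, hA⟩ := hρ_bdd
  have hx_norm : ‖x‖ ≠ 0 := norm_ne_zero_iff.2 hx
  have h_radial := factorsThrough_norm_of_rotation_invariant (by simp) hρ_radial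
  have h_field := integrable_smul_newtonKernel hρ_int
    (fun y ↦ (norm_of_nonneg (hρ_nonneg y)).trans_le (hA y)) x
  set M := ∫ y in {y : E3 | ‖y‖ ≤ ‖x‖}, ρ y
  have hM_nonneg : 0 ≤ M := integral_nonneg hρ_nonneg
  have hM_le : M ≤ ∫ y, ρ y := setIntegral_le_integral hρ_int (.of_forall hρ_nonneg)
  have h_formula : (4 * π)⁻¹ • ∫ y, (ρ y / ‖x - y‖ ^ 3) • (x - y) =
      ((4 * π * ‖x‖ ^ 3)⁻¹ * M) • x := by
    simp only [div_norm_pow_three_smul]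
    rw [integral_smul_newtonKernel_of_radial h_radial hρ_int hx h_field, smul_smul,
      mul_inv (4 * π), mul_assoc]
  have h_direction : ((4 * π * ‖x‖ ^ 3)⁻¹ * M) • x =
      ((4 * π * ‖x‖ ^ 2)⁻¹ * M) • (‖x‖⁻¹ • x) := by
    match_scalars
    field_simp
  have h_unit : ‖‖x‖⁻¹ • x‖ = 1 := norm_smul_inv_norm (𝕜 := ℝ) hx
  refine ⟨h_formula, ⟨(4 * π * ‖x‖ ^ 2)⁻¹ * M, by positivity, h_formula.trans h_direction⟩, ?_⟩
  rw [h_formula, h_direction, norm_smul, h_unit, mul_one, norm_of_nonneg (by positivity)]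
  gcongr
end
end

section
/- Let $\delta \in (0, 10^{-10})$, let $n \ge 7$, and let $D > 0$. There exists a constant $C$ (depending only on $\delta$, $n$, $D$) such that: for every measurable $f : \mathbb{R}^3 \times \mathbb{R}^3 \to [0,\infty)$ with $f \le D$ almost everywhere and $\iint (1+|v|) f(x,v)\,dx\,dv \le D$, setting $\rho(x) := \int_{\mathbb{R}^3} f(x,v)\,dv$ and $M := \iint (1+|v|)^n f(x,v)\,dx\,dv$ (assumed finite), one has for every $x \in \mathbb{R}^3$: $\Big|\int_{\mathbb{R}^3} \frac{\rho(y)\,(y-x)}{|x-y|^3}\,dy\Big| \le C \big( 1 + M^{(5+\delta)/((3-\delta)(n-1))} \big)$. -/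
open MeasureTheory Real Set
noncomputable section

/-!
In dimension `d` the field is dominated by `∬ |x - y| ^ (1 - d) f(y, v) dy dv`. For each velocity
`v`, split the `y`-integral at a radius `R(v)`. Inside, `f ≤ A` and the kernel has mass proportional
to `R(v)`; outside, the kernel is at most `R(v) ^ (1 - d)`. Taking `R(v) = a φ((1 + |v|) / W)` with
`φ(s) = (s ^ k + s ^ n) ^ (1 / (1 - d))` turns the outer part into the `k`-th and `n`-th moments,
while `φ(|v|)` is integrable on an `m`-dimensional velocity space since `k < m (d - 1) < n`. The
scale `W = max(1, M_n) ^ (1 / (n - k))` balances the two moments, and `a = W ^ (-(k + m) / d)`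
balances the inner part against the outer one, which gives the exponent
`(m (d - 1) - k) / (d (n - k))`; for `d = m = 3` and `k = 1` it is `5 / (3 (n - 1))`.
-/

open Module Metric
open scoped ENNReal

local notation "dim" => finrank ℝ

section ENNRealPowers

lemma ennreal_rpow_le_rpow_of_nonpos {s t : ℝ≥0∞} {z : ℝ} (hst : s ≤ t) (hz : z ≤ 0) :
    t ^ z ≤ s ^ z := by
  simpa [ENNReal.rpow_neg] using ENNReal.rpow_le_rpow hst (neg_nonneg.2 hz)

lemma ofReal_pow_mul_ofReal_rpow {t : ℝ} (ht : 0 < t) (j : ℕ) (z : ℝ) :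
    ENNReal.ofReal (t ^ j) * ENNReal.ofReal t ^ z = ENNReal.ofReal (t ^ (j + z)) := by
  rw [ENNReal.ofReal_rpow_of_pos ht, ← ENNReal.ofReal_mul (by positivity), Real.rpow_add ht,
    Real.rpow_natCast]

lemma volume_ofReal_le_inter_Ioi_zero (R : ℝ≥0∞) :
    volume ({t | ENNReal.ofReal t ≤ R} ∩ Ioi (0 : ℝ)) = R := by
  induction R with
  | top => simp
  | coe R =>
    have : {t | ENNReal.ofReal t ≤ R} ∩ Ioi (0 : ℝ) = Ioc 0 (R : ℝ) := by
      ext t; simp [and_comm]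
    rw [this, Real.volume_Ioc, sub_zero, ENNReal.ofReal_coe_nnreal]

lemma max_one_rpow_le_one_add_rpow {t : ℝ≥0∞} {a b : ℝ} (hb : 0 ≤ b) (hab : a ≤ b) :
    max 1 t ^ a ≤ 1 + t ^ b :=
  calc
    max 1 t ^ a ≤ max 1 t ^ b := ENNReal.rpow_le_rpow_of_exponent_le (le_max_left _ _) hab
    _ = max 1 (t ^ b) := by
      rw [(ENNReal.monotone_rpow_of_nonneg hb).map_max, ENNReal.one_rpow]
    _ ≤ 1 + t ^ b := max_le_add_of_nonneg zero_le_one zero_le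

end ENNRealPowers

section Haar

variable {E : Type*} [NormedAddCommGroup E] [NormedSpace ℝ E] [FiniteDimensional ℝ E]
  [MeasurableSpace E] [BorelSpace E] (μ : Measure E) [μ.IsAddHaarMeasure]

lemma lintegral_comp_norm_addHaar [Nontrivial E] {φ : ℝ → ℝ≥0∞} (hφ : Measurable φ) :
    ∫⁻ x, φ ‖x‖ ∂μ =
      dim E * μ (ball 0 1) * ∫⁻ t in Ioi (0 : ℝ), ENNReal.ofReal (t ^ (dim E - 1)) * φ t :=
  calc
    ∫⁻ x, φ ‖x‖ ∂μ = ∫⁻ x : ({0}ᶜ : Set E), φ ‖x.1‖ ∂(μ.comap (↑)) := by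
      rw [lintegral_subtype_comap (measurableSet_singleton _).compl (fun x ↦ φ ‖x‖),
        restrict_compl_singleton]
    _ = ∫⁻ p, φ p.2 ∂(μ.toSphere.prod (.volumeIoiPow (dim E - 1))) := by
      simpa using μ.measurePreserving_homeomorphUnitSphereProd.lintegral_comp_emb
        (Homeomorph.measurableEmbedding _) (fun p ↦ φ p.2)
    _ = μ.toSphere univ * ∫⁻ t : Ioi (0 : ℝ), φ t ∂(.volumeIoiPow (dim E - 1)) := by
      rw [lintegral_prod _ (by fun_prop)]
      simp only [lintegral_const, mul_comm]
    _ = dim E * μ (ball 0 1) *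
        ∫⁻ t in Ioi (0 : ℝ), ENNReal.ofReal (t ^ (dim E - 1)) * φ t := by
      rw [μ.toSphere_apply_univ, Measure.volumeIoiPow,
        lintegral_withDensity_eq_lintegral_mul _ (by fun_prop) (by fun_prop),
        ← lintegral_subtype_comap measurableSet_Ioi]
      rfl

lemma lintegral_comp_smul_addHaar {g : E → ℝ≥0∞} (hg : Measurable g) {r : ℝ} (hr : r ≠ 0) :
    ∫⁻ v, g (r • v) ∂μ = ENNReal.ofReal |(r ^ dim E)⁻¹| * ∫⁻ v, g v ∂μ := by
  rw [← lintegral_map hg (measurable_const_smul r), Measure.map_addHaar_smul μ hr,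
    lintegral_smul_measure, smul_eq_mul]

lemma lintegral_comp_one_add_enorm_div_le {φ : ℝ≥0∞ → ℝ≥0∞} (hφ : Antitone φ) {W : ℝ≥0∞}
    (hW₀ : W ≠ 0) (hW : W ≠ ∞) :
    ∫⁻ v, φ ((1 + ‖v‖ₑ) / W) ∂μ ≤ W ^ dim E * ∫⁻ v, φ ‖v‖ₑ ∂μ := by
  have hr : 0 < W.toReal⁻¹ := inv_pos.2 (ENNReal.toReal_pos hW₀ hW)
  have enorm_smul_le (v : E) : ‖W.toReal⁻¹ • v‖ₑ ≤ (1 + ‖v‖ₑ) / W := by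
    rw [enorm_smul, Real.enorm_of_nonneg hr.le, ENNReal.ofReal_inv_of_pos (inv_pos.1 hr),
      ENNReal.ofReal_toReal hW, ENNReal.div_eq_inv_mul]
    gcongr
    exact le_add_self
  calc
    ∫⁻ v, φ ((1 + ‖v‖ₑ) / W) ∂μ ≤ ∫⁻ v, φ ‖W.toReal⁻¹ • v‖ₑ ∂μ :=
      lintegral_mono fun v ↦ hφ (enorm_smul_le v)
    _ = ENNReal.ofReal |(W.toReal⁻¹ ^ dim E)⁻¹| * ∫⁻ v, φ ‖v‖ₑ ∂μ :=
      lintegral_comp_smul_addHaar μ (hφ.measurable.comp measurable_enorm) hr.ne'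
    _ = W ^ dim E * ∫⁻ v, φ ‖v‖ₑ ∂μ := by
      rw [inv_pow, inv_inv, abs_of_nonneg (by positivity), ENNReal.ofReal_pow (by positivity),
        ENNReal.ofReal_toReal hW]

lemma setLIntegral_closedEBall_enorm_sub_rpow_one_sub_finrank [Nontrivial E] (x : E) (R : ℝ≥0∞) :
    ∫⁻ y in closedEBall x R, ‖x - y‖ₑ ^ (1 - dim E : ℝ) ∂μ = dim E * μ (ball 0 1) * R := by
  let radii : Set ℝ := {t | ENNReal.ofReal t ≤ R}
  let κ : ℝ → ℝ≥0∞ := radii.indicator fun t ↦ ENNReal.ofReal t ^ (1 - dim E : ℝ)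
  have hradii : MeasurableSet radii := measurableSet_le (by fun_prop) (by fun_prop)
  have hκ : Measurable κ := Measurable.indicator (by fun_prop) hradii
  have jacobian_mul_kernel :
      ∀ t ∈ Ioi (0 : ℝ), ENNReal.ofReal (t ^ (dim E - 1)) * κ t = radii.indicator 1 t := by
    intro t ht
    have : ((dim E - 1 : ℕ) : ℝ) + (1 - dim E : ℝ) = 0 := by
      rw [Nat.cast_pred finrank_pos]; ring
    by_cases htR : t ∈ radii <;> simp [κ, htR, ofReal_pow_mul_ofReal_rpow ht, this]
  calc
    ∫⁻ y in closedEBall x R, ‖x - y‖ₑ ^ (1 - dim E : ℝ) ∂μ = ∫⁻ y, κ ‖x - y‖ ∂μ := by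
      rw [← lintegral_indicator isClosed_closedEBall.measurableSet]
      congr! 2 with y
      simp [κ, radii, indicator, edist_comm y x, edist_eq_enorm_sub]
    _ = ∫⁻ y, κ ‖y‖ ∂μ := lintegral_sub_left_eq_self (fun y ↦ κ ‖y‖) x
    _ = dim E * μ (ball 0 1) * R := by
      rw [lintegral_comp_norm_addHaar μ hκ,
        setLIntegral_congr_fun measurableSet_Ioi jacobian_mul_kernel,
        lintegral_indicator_one hradii, Measure.restrict_apply hradii,
        volume_ofReal_le_inter_Ioi_zero]

end Haar

/-- The profile of the velocity-dependent cutoff radius. For `z = (1 - d)⁻¹` the radius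
`R = a * cutoffProfile k n z s` satisfies `R ^ (1 - d) = a ^ (1 - d) * (s ^ k + s ^ n)`, so that
outside the cutoff the kernel is bounded by exactly the two moment weights. -/
def cutoffProfile (k n z : ℝ) (s : ℝ≥0∞) : ℝ≥0∞ := (s ^ k + s ^ n) ^ z

section CutoffProfile

variable {k n z : ℝ}

lemma antitone_cutoffProfile (hk : 0 ≤ k) (hn : 0 ≤ n) (hz : z ≤ 0) :
    Antitone (cutoffProfile k n z) := fun _ _ hst ↦
  ennreal_rpow_le_rpow_of_nonpos
    (add_le_add (ENNReal.rpow_le_rpow hst hk) (ENNReal.rpow_le_rpow hst hn)) hz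

lemma cutoffProfile_le_rpow_left (hz : z ≤ 0) (s : ℝ≥0∞) :
    cutoffProfile k n z s ≤ s ^ (k * z) :=
  (ennreal_rpow_le_rpow_of_nonpos le_self_add hz).trans_eq (ENNReal.rpow_mul s k z).symm

lemma cutoffProfile_le_rpow_right (hz : z ≤ 0) (s : ℝ≥0∞) :
    cutoffProfile k n z s ≤ s ^ (n * z) :=
  (ennreal_rpow_le_rpow_of_nonpos le_add_self hz).trans_eq (ENNReal.rpow_mul s n z).symm

lemma cutoffProfile_ne_top (hz : z ≤ 0) {s : ℝ≥0∞} (hs₀ : s ≠ 0) (hs : s ≠ ∞) :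
    cutoffProfile k n z s ≠ ∞ :=
  ne_top_of_le_ne_top (ENNReal.rpow_ne_top_of_ne_zero hs₀ hs) (cutoffProfile_le_rpow_left hz s)

lemma cutoffProfile_inv_rpow (hz : z ≠ 0) (s : ℝ≥0∞) :
    cutoffProfile k n z⁻¹ s ^ z = s ^ k + s ^ n := by
  rw [cutoffProfile, ← ENNReal.rpow_mul, inv_mul_cancel₀ hz, ENNReal.rpow_one]

variable {F : Type*} [NormedAddCommGroup F] [NormedSpace ℝ F] [FiniteDimensional ℝ F]
  [Nontrivial F] [MeasurableSpace F] [BorelSpace F] (ν : Measure F) [ν.IsAddHaarMeasure]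

lemma lintegral_cutoffProfile_enorm_lt_top (hz : z ≤ 0) (hk : 0 < dim F + k * z)
    (hn : dim F + n * z < 0) : ∫⁻ v, cutoffProfile k n z ‖v‖ₑ ∂ν < ∞ := by
  have hmeas : Measurable fun t : ℝ ↦ cutoffProfile k n z (ENNReal.ofReal t) := by
    unfold cutoffProfile; fun_prop
  have hexp (j : ℝ) : ((dim F - 1 : ℕ) : ℝ) + j * z = dim F + j * z - 1 := by
    rw [Nat.cast_pred finrank_pos]; ring
  have near_zero : ∫⁻ t in Ioc (0 : ℝ) 1, ENNReal.ofReal (t ^ (dim F - 1)) *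
      cutoffProfile k n z (ENNReal.ofReal t) < ∞ := by
    have hint : IntegrableOn (fun t : ℝ ↦ t ^ (dim F + k * z - 1)) (Ioc 0 1) :=
      (intervalIntegrable_iff_integrableOn_Ioc_of_le zero_le_one).1
        (intervalIntegral.intervalIntegrable_rpow' (by linarith))
    refine (setLIntegral_mono' measurableSet_Ioc fun t ht ↦ ?_).trans_lt hint.lintegral_lt_top
    rw [← hexp, ← ofReal_pow_mul_ofReal_rpow ht.1]
    gcongr
    exact cutoffProfile_le_rpow_left hz _
  have near_infinity : ∫⁻ t in Ioi (1 : ℝ), ENNReal.ofReal (t ^ (dim F - 1)) *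
      cutoffProfile k n z (ENNReal.ofReal t) < ∞ := by
    have hint : IntegrableOn (fun t : ℝ ↦ t ^ (dim F + n * z - 1)) (Ioi 1) :=
      integrableOn_Ioi_rpow_of_lt (by linarith) one_pos
    refine (setLIntegral_mono' measurableSet_Ioi fun t ht ↦ ?_).trans_lt hint.lintegral_lt_top
    rw [← hexp, ← ofReal_pow_mul_ofReal_rpow (one_pos.trans ht)]
    gcongr
    exact cutoffProfile_le_rpow_right hz _
  simp only [← ofReal_norm]
  rw [lintegral_comp_norm_addHaar ν hmeas, ← Ioc_union_Ioi_eq_Ioi zero_le_one]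
  refine ENNReal.mul_lt_top (ENNReal.mul_lt_top (ENNReal.natCast_lt_top _) measure_ball_lt_top) ?_
  exact (lintegral_union_le _ _ _).trans_lt (ENNReal.add_lt_top.2 ⟨near_zero, near_infinity⟩)

end CutoffProfile

section FieldConstant

variable {E F : Type*} [NormedAddCommGroup E] [NormedSpace ℝ E] [FiniteDimensional ℝ E]
  [MeasurableSpace E] [NormedAddCommGroup F] [NormedSpace ℝ F] [FiniteDimensional ℝ F]
  [MeasurableSpace F] [BorelSpace F]

/-- The dimensional factor multiplying `‖f‖_∞` in the field estimate: the mass of the kernel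
`|x - y| ^ (1 - d)` on balls of radius `R` is `d * μ (ball 0 1) * R`, and `R` is then integrated
over velocities at unit scale. -/
def fieldConstant (μ : Measure E) (ν : Measure F) (k n : ℝ) : ℝ≥0∞ :=
  dim E * μ (ball 0 1) * ∫⁻ v, cutoffProfile k n (1 - dim E : ℝ)⁻¹ ‖v‖ₑ ∂ν

lemma fieldConstant_ne_top [Nontrivial F] {μ : Measure E} [μ.IsAddHaarMeasure] {ν : Measure F}
    [ν.IsAddHaarMeasure] {k n : ℝ} (hd : 1 < dim E) (hk : k < dim F * (dim E - 1 : ℝ))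
    (hn : dim F * (dim E - 1 : ℝ) < n) : fieldConstant μ ν k n ≠ ∞ := by
  have hd' : (0 : ℝ) < dim E - 1 := sub_pos.2 (mod_cast hd)
  have hz : (1 - dim E : ℝ)⁻¹ = -(dim E - 1 : ℝ)⁻¹ := by rw [← inv_neg, neg_sub]
  refine ENNReal.mul_ne_top (ENNReal.mul_ne_top (ENNReal.natCast_ne_top _)
    measure_ball_lt_top.ne) (lintegral_cutoffProfile_enorm_lt_top ν ?_ ?_ ?_).ne
  · simpa [hz] using hd'.le
  · rwa [hz, mul_neg, ← sub_eq_add_neg, sub_pos, ← div_eq_mul_inv, div_lt_iff₀ hd']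
  · rwa [hz, mul_neg, ← sub_eq_add_neg, sub_neg, ← div_eq_mul_inv, lt_div_iff₀ hd']

end FieldConstant

section VelocityMoment

variable {E F : Type*} [MeasurableSpace E] [NormedAddCommGroup F] [MeasurableSpace F]

/-- The `k`-th velocity moment `∬ (1 + |v|) ^ k f(x, v) dx dv` of a phase space density. -/
def velocityMoment (μ : Measure E) (ν : Measure F) (f : E × F → ℝ≥0∞) (k : ℝ) : ℝ≥0∞ :=
  ∫⁻ p, (1 + ‖p.2‖ₑ) ^ k * f p ∂(μ.prod ν)

variable {μ : Measure E} {ν : Measure F} {j k n : ℝ}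

lemma velocityMoment_enorm_eq_ofReal_integral {f : E × F → ℝ}
    (hf : Integrable (fun p ↦ (1 + ‖p.2‖) ^ k * f p) (μ.prod ν)) :
    velocityMoment μ ν (fun p ↦ ‖f p‖ₑ) k =
      ENNReal.ofReal (∫ p, (1 + ‖p.2‖) ^ k * |f p| ∂(μ.prod ν)) := by
  have norm_weight (v : F) : ‖(1 + ‖v‖) ^ k‖ = (1 + ‖v‖) ^ k := norm_of_nonneg (by positivity)
  have enorm_weight (v : F) : ‖(1 + ‖v‖) ^ k‖ₑ = (1 + ‖v‖ₑ) ^ k := by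
    rw [← ofReal_norm, norm_weight, ← ENNReal.ofReal_rpow_of_pos (by positivity),
      ENNReal.ofReal_add zero_le_one (norm_nonneg v), ENNReal.ofReal_one, ofReal_norm]
  simpa only [velocityMoment, norm_mul, norm_weight, Real.norm_eq_abs, enorm_mul, enorm_weight]
    using (ofReal_integral_norm_eq_lintegral_enorm hf).symm

lemma integrable_one_add_norm_rpow_mul_of_le [OpensMeasurableSpace F] {f : E × F → ℝ}
    (hjn : j ≤ n) (hf : Integrable (fun p ↦ (1 + ‖p.2‖) ^ n * f p) (μ.prod ν)) :
    Integrable (fun p ↦ (1 + ‖p.2‖) ^ j * f p) (μ.prod ν) := by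
  have hweight : Measurable fun p : E × F ↦ (1 + ‖p.2‖) ^ (j - n) := by fun_prop
  refine (hf.bdd_mul hweight.aestronglyMeasurable (c := 1) (.of_forall fun p ↦ ?_)).congr
    (.of_forall fun p ↦ ?_)
  · rw [norm_of_nonneg (by positivity)]
    exact Real.rpow_le_one_of_one_le_of_nonpos (by simp) (sub_nonpos.2 hjn)
  · simp only
    rw [← mul_assoc, ← Real.rpow_add (by positivity), sub_add_cancel]

lemma lintegral_add_rpow_one_add_enorm_div [OpensMeasurableSpace F] {f : E × F → ℝ≥0∞}
    (hf : AEMeasurable f (μ.prod ν)) (hk : 0 ≤ k)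
    (hn : 0 ≤ n) (W : ℝ≥0∞) :
    ∫⁻ p, (((1 + ‖p.2‖ₑ) / W) ^ k + ((1 + ‖p.2‖ₑ) / W) ^ n) * f p ∂(μ.prod ν) =
      W ^ (-k) * velocityMoment μ ν f k + W ^ (-n) * velocityMoment μ ν f n := by
  have hweight (j : ℝ) : AEMeasurable (fun p : E × F ↦ (1 + ‖p.2‖ₑ) ^ j * f p) (μ.prod ν) := by
    fun_prop
  rw [velocityMoment, velocityMoment, ← lintegral_const_mul'' _ (hweight k),
    ← lintegral_const_mul'' _ (hweight n), ← lintegral_add_left' ((hweight k).const_mul _)]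
  refine lintegral_congr fun p ↦ ?_
  rw [ENNReal.div_rpow_of_nonneg _ _ hk, ENNReal.div_rpow_of_nonneg _ _ hn, ENNReal.rpow_neg,
    ENNReal.rpow_neg, ENNReal.div_eq_inv_mul, ENNReal.div_eq_inv_mul]
  ring

end VelocityMoment

section PhaseSpace

lemma enorm_div_norm_pow_finrank_smul_sub_le {E : Type*} [NormedAddCommGroup E]
    [NormedSpace ℝ E] (c : ℝ) (x y : E) :
    ‖(c / ‖x - y‖ ^ dim E) • (y - x)‖ₑ ≤ ‖x - y‖ₑ ^ (1 - dim E : ℝ) * ‖c‖ₑ := by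
  rcases eq_or_ne x y with rfl | hxy
  · simp
  have hne : ‖x - y‖ₑ ≠ 0 := by simpa [sub_eq_zero] using hxy
  have hpow : ‖x - y‖ ^ dim E ≠ 0 := pow_ne_zero _ (norm_ne_zero_iff.2 (sub_ne_zero.2 hxy))
  rw [enorm_smul, div_eq_mul_inv, enorm_mul, enorm_inv hpow, enorm_pow, enorm_norm,
    enorm_sub_rev y x, ENNReal.rpow_sub _ _ hne enorm_ne_top, ENNReal.rpow_one,
    ENNReal.rpow_natCast, ENNReal.div_eq_inv_mul, mul_comm, mul_comm ‖c‖ₑ]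
  rw [← mul_assoc, mul_comm ‖x - y‖ₑ]

variable {E F : Type*} [NormedAddCommGroup E] [NormedSpace ℝ E] [FiniteDimensional ℝ E]
  [MeasurableSpace E] [BorelSpace E] [MeasurableSpace F]

/-- The Riesz potential of order one, `∬ |x - y| ^ (1 - d) f(y, v) dy dv`, of the spatial density
of `f`. It majorizes the electric field, and unlike it is monotone in `f`. -/
def rieszPotential (μ : Measure E) (ν : Measure F) (f : E × F → ℝ≥0∞) (x : E) : ℝ≥0∞ :=
  ∫⁻ p, ‖x - p.1‖ₑ ^ (1 - dim E : ℝ) * f p ∂(μ.prod ν)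

/-- The electric field `∫ ρ(y) (y - x) / |x - y| ^ d dy`, up to a constant factor, of the spatial
density `ρ(y) = ∫ f(y, v) dv`, where `d` is the dimension of the position space. -/
def electricField (μ : Measure E) (ν : Measure F) (f : E → F → ℝ) (x : E) : E :=
  ∫ y, ((∫ v, f y v ∂ν) / ‖x - y‖ ^ dim E) • (y - x) ∂μ

lemma enorm_electricField_le_rieszPotential {μ : Measure E} {ν : Measure F}
    [SFinite ν] {f : E → F → ℝ} (hf : AEMeasurable (fun p : E × F ↦ f p.1 p.2) (μ.prod ν))
    (x : E) :
    ‖electricField μ ν f x‖ₑ ≤ rieszPotential μ ν (fun p ↦ ‖f p.1 p.2‖ₑ) x :=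
  calc
    ‖electricField μ ν f x‖ₑ ≤ ∫⁻ y, ‖x - y‖ₑ ^ (1 - dim E : ℝ) * ‖∫ v, f y v ∂ν‖ₑ ∂μ :=
      (enorm_integral_le_lintegral_enorm _).trans
        (lintegral_mono fun y ↦ enorm_div_norm_pow_finrank_smul_sub_le _ x y)
    _ ≤ ∫⁻ y, ∫⁻ v, ‖x - y‖ₑ ^ (1 - dim E : ℝ) * ‖f y v‖ₑ ∂ν ∂μ := by
      refine lintegral_mono fun y ↦ ?_
      grw [enorm_integral_le_lintegral_enorm, lintegral_const_mul_le]
    _ = rieszPotential μ ν (fun p ↦ ‖f p.1 p.2‖ₑ) x := by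
      rw [rieszPotential, lintegral_prod _ (by fun_prop)]

lemma rieszPotential_le_of_cutoff [Nontrivial E] {μ : Measure E} [μ.IsAddHaarMeasure]
    {ν : Measure F} [SFinite ν] {f : E × F → ℝ≥0∞} {A : ℝ≥0∞}
    (hfA : ∀ᵐ p ∂(μ.prod ν), f p ≤ A) {R : F → ℝ≥0∞} (hR : Measurable R) (x : E) :
    rieszPotential μ ν f x ≤ A * (dim E * μ (ball 0 1) * ∫⁻ v, R v ∂ν) +
      ∫⁻ p, R p.2 ^ (1 - dim E : ℝ) * f p ∂(μ.prod ν) := by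
  let near : Set (E × F) := {p | p.1 ∈ closedEBall x (R p.2)}
  let nearKernel : E × F → ℝ≥0∞ := near.indicator fun p ↦ ‖x - p.1‖ₑ ^ (1 - dim E : ℝ)
  have hnear : MeasurableSet near :=
    measurableSet_le (f := fun p : E × F ↦ edist p.1 x) (g := fun p ↦ R p.2) (by fun_prop)
      (by fun_prop)
  have hkernel : Measurable nearKernel := Measurable.indicator (by fun_prop) hnear
  have hdim : (1 - dim E : ℝ) ≤ 0 := by
    have : 1 ≤ dim E := finrank_pos
    exact sub_nonpos.2 (mod_cast this)
  have split_near_far : ∀ᵐ p ∂(μ.prod ν), ‖x - p.1‖ₑ ^ (1 - dim E : ℝ) * f p ≤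
      A * nearKernel p + R p.2 ^ (1 - dim E : ℝ) * f p := by
    filter_upwards [hfA] with p hp
    by_cases hpn : p ∈ near
    · refine le_add_right ?_
      rw [mul_comm, show nearKernel p = _ from indicator_of_mem hpn _]
      gcongr
    · have : R p.2 ≤ ‖x - p.1‖ₑ := by
        rw [← edist_eq_enorm_sub, edist_comm]; exact (not_le.1 hpn).le
      refine le_add_left ?_
      exact mul_le_mul_left (ennreal_rpow_le_rpow_of_nonpos this hdim) _
  have lintegral_nearKernel :
      ∫⁻ p, nearKernel p ∂(μ.prod ν) = dim E * μ (ball 0 1) * ∫⁻ v, R v ∂ν := by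
    rw [lintegral_prod_symm _ hkernel.aemeasurable, ← lintegral_const_mul _ hR]
    refine lintegral_congr fun v ↦ ?_
    rw [← setLIntegral_closedEBall_enorm_sub_rpow_one_sub_finrank μ x (R v),
      ← lintegral_indicator isClosed_closedEBall.measurableSet]
    rfl
  calc
    rieszPotential μ ν f x
        ≤ ∫⁻ p, (A * nearKernel p + R p.2 ^ (1 - dim E : ℝ) * f p) ∂(μ.prod ν) :=
      lintegral_mono_ae split_near_far
    _ = _ := by
      rw [lintegral_add_left (hkernel.const_mul A), lintegral_const_mul A hkernel,
        lintegral_nearKernel]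

variable [NormedAddCommGroup F] [NormedSpace ℝ F] [FiniteDimensional ℝ F] [BorelSpace F]
  {μ : Measure E} [μ.IsAddHaarMeasure] {ν : Measure F} [ν.IsAddHaarMeasure]
  {f : E × F → ℝ≥0∞} {A : ℝ≥0∞} {k n : ℝ}

lemma rieszPotential_le_add_velocityMoment (hd : 1 < dim E) (hf : AEMeasurable f (μ.prod ν))
    (hfA : ∀ᵐ p ∂(μ.prod ν), f p ≤ A) (hk : 0 ≤ k) (hn : 0 ≤ n) {a W : ℝ≥0∞}
    (ha : a ≠ ∞) (hW₀ : W ≠ 0) (hW : W ≠ ∞) (x : E) :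
    rieszPotential μ ν f x ≤
      A * (dim E * μ (ball 0 1) *
        (a * (W ^ dim F * ∫⁻ v, cutoffProfile k n (1 - dim E : ℝ)⁻¹ ‖v‖ₑ ∂ν))) +
      a ^ (1 - dim E : ℝ) *
        (W ^ (-k) * velocityMoment μ ν f k + W ^ (-n) * velocityMoment μ ν f n) := by
  have : Nontrivial E := nontrivial_of_finrank_pos (R := ℝ) (zero_lt_one.trans hd)
  have hz : (1 - dim E : ℝ) < 0 := sub_neg.2 (mod_cast hd)
  have hz' : (1 - dim E : ℝ)⁻¹ ≤ 0 := (inv_lt_zero.2 hz).le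
  have hφ := antitone_cutoffProfile hk hn hz'
  let s : F → ℝ≥0∞ := fun v ↦ (1 + ‖v‖ₑ) / W
  have hs : Measurable s := by fun_prop
  let R : F → ℝ≥0∞ := fun v ↦ a * cutoffProfile k n (1 - dim E : ℝ)⁻¹ (s v)
  have hR : Measurable R := (hφ.measurable.comp hs).const_mul a
  have hR_rpow (v : F) : R v ^ (1 - dim E : ℝ) = a ^ (1 - dim E : ℝ) * (s v ^ k + s v ^ n) := by
    have hsv₀ : s v ≠ 0 := by simp [s, hW]
    have hsv : s v ≠ ∞ := by simp [s, ENNReal.div_eq_top, hW₀]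
    rw [ENNReal.mul_rpow_of_ne_top ha (cutoffProfile_ne_top hz' hsv₀ hsv),
      cutoffProfile_inv_rpow hz.ne]
  grw [rieszPotential_le_of_cutoff hfA hR x]
  gcongr ?_ + ?_
  · rw [show ∫⁻ v, R v ∂ν = a * ∫⁻ v, cutoffProfile k n (1 - dim E : ℝ)⁻¹ (s v) ∂ν from
      lintegral_const_mul a (hφ.measurable.comp hs)]
    grw [lintegral_comp_one_add_enorm_div_le ν hφ hW₀ hW]
  · simp only [hR_rpow, mul_assoc]
    rw [lintegral_const_mul'' _ (by fun_prop), lintegral_add_rpow_one_add_enorm_div hf hk hn]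

lemma rieszPotential_le_rpow_of_velocityMoment_le (hd : 1 < dim E)
    (hf : AEMeasurable f (μ.prod ν)) (hfA : ∀ᵐ p ∂(μ.prod ν), f p ≤ A) (hk : 0 ≤ k) (hn : 0 ≤ n)
    {W : ℝ≥0∞} (hW₀ : W ≠ 0) (hW : W ≠ ∞) (hM : velocityMoment μ ν f n ≤ W ^ (n - k)) (x : E) :
    rieszPotential μ ν f x ≤ (A * fieldConstant μ ν k n + velocityMoment μ ν f k + 1) *
      W ^ ((dim F * (dim E - 1) - k) / dim E : ℝ) := by
  have hd₀ : (dim E : ℝ) ≠ 0 := by positivity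
  set e : ℝ := (dim F * (dim E - 1) - k) / dim E with he
  set a : ℝ≥0∞ := W ^ (-((k + dim F) / dim E) : ℝ) with ha_def
  have ha : a ≠ ∞ := ENNReal.rpow_ne_top_of_ne_zero hW₀ hW
  have near_scale : a * W ^ dim F = W ^ e := by
    rw [ha_def, ← ENNReal.rpow_natCast, ← ENNReal.rpow_add _ _ hW₀ hW, he]
    congr 1; field_simp; ring
  have far_scale : a ^ (1 - dim E : ℝ) * W ^ (-k) = W ^ e := by
    rw [ha_def, ← ENNReal.rpow_mul, ← ENNReal.rpow_add _ _ hW₀ hW, he]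
    congr 1; field_simp; ring
  have moment_le : W ^ (-n) * velocityMoment μ ν f n ≤ W ^ (-k) := by
    grw [hM, ← ENNReal.rpow_add _ _ hW₀ hW]
    ring_nf; rfl
  grw [rieszPotential_le_add_velocityMoment hd hf hfA hk hn ha hW₀ hW x, moment_le]
  rw [fieldConstant, ← mul_assoc a, near_scale, mul_add, ← mul_assoc (a ^ _), far_scale]
  exact le_of_eq (by ring)

lemma rieszPotential_le_max_one_rpow (hd : 1 < dim E)
    (hf : AEMeasurable f (μ.prod ν)) (hfA : ∀ᵐ p ∂(μ.prod ν), f p ≤ A) (hk : 0 ≤ k) (hkn : k < n)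
    (hM : velocityMoment μ ν f n ≠ ∞) (x : E) :
    rieszPotential μ ν f x ≤ (A * fieldConstant μ ν k n + velocityMoment μ ν f k + 1) *
      max 1 (velocityMoment μ ν f n) ^ ((dim F * (dim E - 1) - k) / (dim E * (n - k)) : ℝ) := by
  have hnk : 0 < n - k := sub_pos.2 hkn
  have hm : max 1 (velocityMoment μ ν f n) ≠ ∞ := by simp [hM]
  convert rieszPotential_le_rpow_of_velocityMoment_le hd hf hfA hk (hk.trans hkn.le)
    (W := max 1 (velocityMoment μ ν f n) ^ (n - k)⁻¹) (by simp [hm]) (by simp [hm]) ?_ x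
    using 2
  · rw [← ENNReal.rpow_mul]
    congr 1
    field_simp
  · rw [← ENNReal.rpow_mul, inv_mul_cancel₀ hnk.ne', ENNReal.rpow_one]
    exact le_max_right _ _

lemma enorm_electricField_le_max_one_rpow (hd : 1 < dim E) (hk : 0 ≤ k) (hkn : k < n)
    {f : E → F → ℝ} {A : ℝ} (hfA : ∀ᵐ p ∂(μ.prod ν), |f p.1 p.2| ≤ A)
    (hfn : Integrable (fun p ↦ (1 + ‖p.2‖) ^ n * f p.1 p.2) (μ.prod ν)) (x : E) :
    ‖electricField μ ν f x‖ₑ ≤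
      (ENNReal.ofReal A * fieldConstant μ ν k n +
        ENNReal.ofReal (∫ p, (1 + ‖p.2‖) ^ k * |f p.1 p.2| ∂(μ.prod ν)) + 1) *
      max 1 (ENNReal.ofReal (∫ p, (1 + ‖p.2‖) ^ n * |f p.1 p.2| ∂(μ.prod ν))) ^
        ((dim F * (dim E - 1) - k) / (dim E * (n - k)) : ℝ) := by
  have hfk := integrable_one_add_norm_rpow_mul_of_le hkn.le hfn
  have hf : AEMeasurable (fun p ↦ f p.1 p.2) (μ.prod ν) := by
    simpa using (integrable_one_add_norm_rpow_mul_of_le (hk.trans hkn.le) hfn).aemeasurable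
  have hfA' : ∀ᵐ p ∂(μ.prod ν), ‖f p.1 p.2‖ₑ ≤ ENNReal.ofReal A := hfA.mono fun p hp ↦ by
    rw [Real.enorm_eq_ofReal_abs]; exact ENNReal.ofReal_le_ofReal hp
  rw [← velocityMoment_enorm_eq_ofReal_integral hfk, ← velocityMoment_enorm_eq_ofReal_integral hfn]
  refine (enorm_electricField_le_rieszPotential hf x).trans
    (rieszPotential_le_max_one_rpow hd hf.enorm hfA' hk hkn ?_ x)
  rw [velocityMoment_enorm_eq_ofReal_integral hfn]
  exact ENNReal.ofReal_ne_top

end PhaseSpace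

theorem field_moment_bound_general {E F : Type*}
    [NormedAddCommGroup E] [NormedSpace ℝ E] [FiniteDimensional ℝ E] [MeasurableSpace E]
    [BorelSpace E] [NormedAddCommGroup F] [NormedSpace ℝ F] [FiniteDimensional ℝ F]
    [MeasurableSpace F] [BorelSpace F] (μ : Measure E) [μ.IsAddHaarMeasure] (ν : Measure F)
    [ν.IsAddHaarMeasure] {k n θ : ℝ} (hk : 0 ≤ k) (hk' : k < dim F * (dim E - 1 : ℝ))
    (hn : dim F * (dim E - 1 : ℝ) < n)
    (hθ : (dim F * (dim E - 1) - k) / (dim E * (n - k)) ≤ θ) (A B : ℝ) :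
    ∃ C : ℝ, ∀ f : E → F → ℝ, (∀ᵐ p ∂(μ.prod ν), |f p.1 p.2| ≤ A) →
      Integrable (fun p ↦ (1 + ‖p.2‖) ^ n * f p.1 p.2) (μ.prod ν) →
      ∫ p, (1 + ‖p.2‖) ^ k * |f p.1 p.2| ∂(μ.prod ν) ≤ B →
      ∀ x, ‖electricField μ ν f x‖ ≤
        C * (1 + (∫ p, (1 + ‖p.2‖) ^ n * |f p.1 p.2| ∂(μ.prod ν)) ^ θ) := by
  have hkn : k < n := hk'.trans hn
  have hF : 0 < dim F := Nat.pos_of_ne_zero fun h ↦ by simp [h, hk.not_gt] at hk'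
  have hE : 1 < dim E := by
    have : (0 : ℝ) < dim E - 1 :=
      (mul_pos_iff_of_pos_left (Nat.cast_pos.2 hF)).1 (hk.trans_lt hk')
    exact_mod_cast sub_pos.1 this
  have hθ₀ : 0 ≤ θ := hθ.trans' (div_nonneg (sub_nonneg.2 hk'.le)
    (mul_nonneg (Nat.cast_nonneg _) (sub_nonneg.2 hkn.le)))
  have : Nontrivial F := nontrivial_of_finrank_pos (R := ℝ) hF
  set K : ℝ≥0∞ := ENNReal.ofReal A * fieldConstant μ ν k n + ENNReal.ofReal B + 1
  have hK : K ≠ ∞ := by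
    simp [K, ENNReal.mul_ne_top ENNReal.ofReal_ne_top (fieldConstant_ne_top hE hk' hn)]
  refine ⟨K.toReal, fun f hfA hfn hfB x ↦ ?_⟩
  set M : ℝ := ∫ p, (1 + ‖p.2‖) ^ n * |f p.1 p.2| ∂(μ.prod ν)
  have hM : 0 ≤ M := integral_nonneg fun p ↦ by positivity
  rw [← ENNReal.ofReal_le_ofReal_iff (by positivity), ofReal_norm]
  calc
    ‖electricField μ ν f x‖ₑ ≤ K * (1 + ENNReal.ofReal M ^ θ) := by
      grw [enorm_electricField_le_max_one_rpow hE hk hkn hfA hfn,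
        max_one_rpow_le_one_add_rpow hθ₀ hθ, hfB]
    _ = ENNReal.ofReal (K.toReal * (1 + M ^ θ)) := by
      rw [ENNReal.ofReal_mul ENNReal.toReal_nonneg, ENNReal.ofReal_toReal hK,
        ENNReal.ofReal_add zero_le_one (by positivity), ENNReal.ofReal_one,
        ENNReal.ofReal_rpow_of_nonneg hM hθ₀]

/-- The electric field of a particle distribution `f` is bounded by
`C (1 + M^{(5+δ)/((3-δ)(n-1))})` where `M` is the `n`-th velocity moment, provided
`f ≤ D` a.e. and the first velocity moment is at most `D`. -/
theorem field_moment_bound (δ n D : ℝ)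
    (hδ : δ ∈ Set.Ioo (0 : ℝ) (((10 : ℝ) ^ (10 : ℕ))⁻¹)) (hn : 7 ≤ n) (hD : 0 < D) :
    ∃ C : ℝ, ∀ f : E3 → E3 → ℝ,
      Measurable (fun p : E3 × E3 => f p.1 p.2) → (∀ x v, 0 ≤ f x v) →
      (∀ᵐ p : E3 × E3, f p.1 p.2 ≤ D) →
      Integrable (fun p : E3 × E3 => (1 + ‖p.2‖) * f p.1 p.2) volume →
      (∫ p : E3 × E3, (1 + ‖p.2‖) * f p.1 p.2) ≤ D →
      Integrable (fun p : E3 × E3 => (1 + ‖p.2‖) ^ n * f p.1 p.2) volume →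
      ∀ x : E3,
        ‖∫ y, ((∫ v, f y v) / ‖x - y‖ ^ 3) • (y - x)‖ ≤
          C * (1 + (∫ p : E3 × E3, (1 + ‖p.2‖) ^ n * f p.1 p.2) ^
            ((5 + δ) / ((3 - δ) * (n - 1)))) := by
  obtain ⟨hδ₀, hδ₁⟩ : 0 < δ ∧ δ < 1 := ⟨hδ.1, hδ.2.trans (by norm_num)⟩
  have exponent_le : (3 * (3 - 1) - 1) / (3 * (n - 1)) ≤ (5 + δ) / ((3 - δ) * (n - 1)) := by
    have : 0 < (3 - δ) * (n - 1) := mul_pos (by linarith) (by linarith)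
    gcongr <;> linarith
  obtain ⟨C, hC⟩ := field_moment_bound_general (volume : Measure E3) (volume : Measure E3)
    (k := 1) (n := n) zero_le_one (by norm_num) (by norm_num; linarith)
    (by simpa using exponent_le) D D
  refine ⟨C, fun f _ hf₀ hfD _ hf₁ hfn x ↦ ?_⟩
  rw [Measure.volume_eq_prod] at hfD hfn hf₁ ⊢
  simpa [electricField, abs_of_nonneg (hf₀ _ _)] using hC f
    (by simpa only [abs_of_nonneg (hf₀ _ _)] using hfD) hfn
    (by simpa [abs_of_nonneg (hf₀ _ _)] using hf₁) x
end
end
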